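/- Let Ω ⊆ ℝ^d be open and let 𝒜 be the set of all u = [(u_ε)_ε] ∈ 𝒢_c(Ω) for which there exists N ∈ ℕ such that for all compact K ⊂⊂ Ω and all k ∈ ℕ, p_{k,K}(u_ε) ≤ ε^{−Nk−N} for small ε. Then 𝒜 is dense in 𝒢(Ω) with respect to the sharp topology. -/

import Mathlib

open Filter MeasureTheory Metric Set
open scoped Topology BigOperators

noncomputable section

/-- Euclidean space ℝ^d. -/
abbrev Euc (d : ℕ) : Type := EuclideanSpace ℝ (Fin d)

variable {d : ℕ}

/-- "P ε holds for small ε". -/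
def SmallE (P : ℝ → Prop) : Prop :=
  ∃ ε₀ : ℝ, 0 < ε₀ ∧ ∀ ε : ℝ, 0 < ε → ε < ε₀ → P ε

/-- Directional derivative ∂ₑ u in the direction e. -/
def pderivDir {F : Type} [NormedAddCommGroup F] [NormedSpace ℝ F]
    (e : Euc d) (u : Euc d → F) : Euc d → F :=
  fun x => fderiv ℝ u x e

/-- Multi-index partial derivative ∂^α u. -/
def partialDeriv {F : Type} [NormedAddCommGroup F] [NormedSpace ℝ F]
    (α : Fin d → ℕ) (u : Euc d → F) : Euc d → F :=
  (List.finRange d).foldr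
    (fun i v => (pderivDir (EuclideanSpace.single i (1 : ℝ)))^[α i] v) u

/-- p_{α,K}(u) = sup_{x ∈ K} |∂^α u(x)|. -/
def pSemi {F : Type} [NormedAddCommGroup F] [NormedSpace ℝ F]
    (α : Fin d → ℕ) (K : Set (Euc d)) (u : Euc d → F) : ℝ :=
  sSup ((fun x => ‖partialDeriv α u x‖) '' K)

/-- p_{k,K}(u) = max_{|α| = k} p_{α,K}(u). -/
def pSemiK {F : Type} [NormedAddCommGroup F] [NormedSpace ℝ F]
    (k : ℕ) (K : Set (Euc d)) (u : Euc d → F) : ℝ :=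
  sSup {y : ℝ | ∃ α : Fin d → ℕ, (∑ i, α i) = k ∧ y = pSemi α K u}

/-- Moderate nets of smooth functions on Ω. -/
def Moderate (Ω : Set (Euc d)) (u : ℝ → Euc d → ℂ) : Prop :=
  (∀ ε ∈ Set.Ioo (0:ℝ) 1, ContDiffOn ℝ (⊤ : ℕ∞) (u ε) Ω) ∧
  ∀ K : Set (Euc d), IsCompact K → K ⊆ Ω → ∀ α : Fin d → ℕ,
    ∃ N : ℕ, SmallE fun ε => pSemi α K (u ε) ≤ ε ^ (-(N : ℝ))

/-- Negligible nets of smooth functions on Ω. -/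
def Negligible (Ω : Set (Euc d)) (u : ℝ → Euc d → ℂ) : Prop :=
  (∀ ε ∈ Set.Ioo (0:ℝ) 1, ContDiffOn ℝ (⊤ : ℕ∞) (u ε) Ω) ∧
  ∀ K : Set (Euc d), IsCompact K → K ⊆ Ω → ∀ α : Fin d → ℕ, ∀ m : ℕ,
    SmallE fun ε => pSemi α K (u ε) ≤ ε ^ (m : ℝ)

/-- The algebra of moderate nets. -/
abbrev ModNet (Ω : Set (Euc d)) : Type := {u : ℝ → Euc d → ℂ // Moderate Ω u}

/-- Two moderate nets are identified when their difference is negligible. -/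
def nulRel (Ω : Set (Euc d)) (u v : ModNet Ω) : Prop :=
  Negligible Ω (fun ε x => u.1 ε x - v.1 ε x)

/-- The special Colombeau algebra 𝒢(Ω). -/
abbrev Colombeau (Ω : Set (Euc d)) : Type := Quot (nulRel Ω)

/-- The valuation of a net of complex numbers, with values in EReal
(⊤ corresponding to nets with arbitrarily good decay). -/
def valuation (z : ℝ → ℂ) : EReal :=
  sSup ((fun b : ℝ => (b : EReal)) '' {b : ℝ | SmallE fun ε => ‖z ε‖ ≤ ε ^ b})

/-- The sharp norm e^{-v(z)} of a net of complex numbers. -/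
def sharpNorm (z : ℝ → ℂ) : ℝ :=
  if valuation z = ⊤ then 0 else Real.exp (-(valuation z).toReal)

/-- P_{k,K}(u) = ‖(p_{k,K}(u_ε))_ε‖ (computed via a representative;
independent of the representative). -/
def PNorm (Ω : Set (Euc d)) (k : ℕ) (K : Set (Euc d)) (u : Colombeau Ω) : ℝ :=
  sharpNorm fun ε => ((pSemiK k K ((Quot.out u).1 ε) : ℝ) : ℂ)

/-- P_{α,K}(u) = ‖(p_{α,K}(u_ε))_ε‖ for a multi-index α. -/
def PNormA (Ω : Set (Euc d)) (α : Fin d → ℕ) (K : Set (Euc d)) (u : Colombeau Ω) : ℝ :=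
  sharpNorm fun ε => ((pSemi α K ((Quot.out u).1 ε) : ℝ) : ℂ)

/-- The ultra-pseudo-seminorm P_{α,K} applied to the difference u - v. -/
def PNormDiff (Ω : Set (Euc d)) (α : Fin d → ℕ) (K : Set (Euc d))
    (u v : Colombeau Ω) : ℝ :=
  sharpNorm fun ε =>
    ((pSemi α K (fun x => (Quot.out u).1 ε x - (Quot.out v).1 ε x) : ℝ) : ℂ)

/-- The sharp topology on 𝒢(Ω): generated by the balls of the
ultra-pseudo-seminorms P_{α,K}. -/
def sharpTopology (Ω : Set (Euc d)) : TopologicalSpace (Colombeau Ω) :=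
  TopologicalSpace.generateFrom
    {S | ∃ (u : Colombeau Ω) (α : Fin d → ℕ) (K : Set (Euc d)) (r : ℝ),
      IsCompact K ∧ K ⊆ Ω ∧ 0 < r ∧ S = {v | PNormDiff Ω α K u v < r}}

/-- K satisfies the segment condition: there is r > 0 such that every x ∈ K lies on
d line segments of length r, in linearly independent (unit) directions, contained in K. -/
def SegmentCond (K : Set (Euc d)) : Prop :=
  ∃ r : ℝ, 0 < r ∧ ∀ x ∈ K, ∃ e : Fin d → Euc d, LinearIndependent ℝ e ∧
    ∀ i : Fin d, ‖e i‖ = 1 ∧ ∃ a : ℝ, a ≤ 0 ∧ 0 ≤ a + r ∧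
      ∀ t : ℝ, a ≤ t → t ≤ a + r → x + t • e i ∈ K

/-- 𝒢^∞(K). -/
def GInfK (Ω : Set (Euc d)) (K : Set (Euc d)) : Set (Colombeau Ω) :=
  {u | ∃ v : ModNet Ω, Quot.mk (nulRel Ω) v = u ∧ ∃ N : ℕ,
    ∀ α : Fin d → ℕ, SmallE fun ε => pSemi α K (v.1 ε) ≤ ε ^ (-(N : ℝ))}

/-- 𝒢^{L,a}(K), the generalized functions of sublinear growth with slope
smaller than a on K. -/
def GLaK (Ω : Set (Euc d)) (a : ℝ) (K : Set (Euc d)) : Set (Colombeau Ω) :=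
  {u | ∃ v : ModNet Ω, Quot.mk (nulRel Ω) v = u ∧ ∃ a' : ℝ, a' < a ∧ ∃ b : ℝ,
    ∀ α : Fin d → ℕ,
      SmallE fun ε => pSemi α K (v.1 ε) ≤ ε ^ (-(a' * (∑ i, (α i : ℝ))) - b)}

/-- 𝒢^{L,0}(K) = ⋂_{a>0} 𝒢^{L,a}(K). -/
def GL0K (Ω : Set (Euc d)) (K : Set (Euc d)) : Set (Colombeau Ω) :=
  {u | ∀ a : ℝ, 0 < a → u ∈ GLaK Ω a K}

/-- 𝒢^∞(Ω) = ⋂_{K⊂⊂Ω} 𝒢^∞(K). -/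
def GInfOmega (Ω : Set (Euc d)) : Set (Colombeau Ω) :=
  {u | ∀ K : Set (Euc d), IsCompact K → K ⊆ Ω → u ∈ GInfK Ω K}

/-- 𝒢^{L,a}(Ω) = ⋂_{K⊂⊂Ω} 𝒢^{L,a}(K). -/
def GLaOmega (Ω : Set (Euc d)) (a : ℝ) : Set (Colombeau Ω) :=
  {u | ∀ K : Set (Euc d), IsCompact K → K ⊆ Ω → u ∈ GLaK Ω a K}

/-- 𝒢^{L,0}(Ω) = ⋂_{K⊂⊂Ω} 𝒢^{L,0}(K). -/
def GL0Omega (Ω : Set (Euc d)) : Set (Colombeau Ω) :=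
  {u | ∀ K : Set (Euc d), IsCompact K → K ⊆ Ω → u ∈ GL0K Ω K}

/-- u ∈ 𝒢(Ω) is sublinear. -/
def Sublinear (Ω : Set (Euc d)) (u : Colombeau Ω) : Prop :=
  ∃ v : ModNet Ω, Quot.mk (nulRel Ω) v = u ∧
    ∀ K : Set (Euc d), IsCompact K → K ⊆ Ω →
      ∀ x : ℝ → Euc d, (∀ ε ∈ Set.Ioo (0:ℝ) 1, x ε ∈ K) →
        ∃ k : ℝ, ∃ p : ℕ → ℝ,
          Filter.Tendsto (fun n : ℕ => p n + k * n) atTop atTop ∧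
          ∀ α : Fin d → ℕ,
            SmallE fun ε => ‖partialDeriv α (v.1 ε) (x ε)‖ ≤ ε ^ (p (∑ i, α i))

/-- The scaled mollifier ψ_δ(x) = δ^{-d} ψ(x/δ). -/
def mollify (ψ : Euc d → ℝ) (δ : ℝ) : Euc d → ℝ :=
  fun x => ((δ : ℝ) ^ d)⁻¹ * ψ (δ⁻¹ • x)

/-- Convolution u ⋆ ψ (with a real-valued kernel ψ). -/
def conv (u : Euc d → ℂ) (ψ : Euc d → ℝ) : Euc d → ℂ :=
  fun x => ∫ t : Euc d, u (x - t) * ((ψ t : ℝ) : ℂ)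

/-- 𝒢_c(Ω): compactly supported generalized functions (restriction to Ω∖K
is 0 in 𝒢(Ω∖K), i.e. some representative is negligible on Ω∖K). -/
def GCompact (Ω : Set (Euc d)) : Set (Colombeau Ω) :=
  {u | ∃ v : ModNet Ω, Quot.mk (nulRel Ω) v = u ∧
    ∃ K : Set (Euc d), IsCompact K ∧ K ⊆ Ω ∧ Negligible (Ω \ K) v.1}

/-!
A class with representative `w` is approximated by cutting `w_ε` off with a test function `χ_n` and
mollifying at scale `ε^n`. All derivatives of `(χ_n w_ε) ⋆ ψ_{ε^n}` can be moved onto the mollifier,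
and each of them costs a factor `ε^{-n}`, while `χ_n w_ε` itself grows like a fixed power of `ε⁻¹`;
this is the growth required of an element of `𝒜`, with a slope depending on `n`. Conversely, moving
all derivatives onto `χ_n w_ε`, which is `w_ε` near a given compact set once `n` is large, the
mollification error is `ε^n` times first derivatives of `∂^α w_ε`, and these grow at most like a
power of `ε⁻¹` independent of `n`; so the error is `O(ε^b)` for every prescribed `b` once `n` is
large.
-/

local notation "∂[" i "]" => pderivDir (EuclideanSpace.single i (1 : ℝ))

section PartialDeriv

variable {F G : Type} [NormedAddCommGroup F] [NormedSpace ℝ F]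
  [NormedAddCommGroup G] [NormedSpace ℝ G]
  {Ω K : Set (Euc d)} {u v : Euc d → F}

lemma multiIndex_induction {ι : Type*} [Finite ι] [DecidableEq ι] {P : (ι → ℕ) → Prop}
    (zero : P 0) (add_single : ∀ α i, P α → P (α + Pi.single i 1)) (α : ι → ℕ) : P α := by
  cases nonempty_fintype ι
  induction hk : ∑ i, α i generalizing α with
  | zero =>
    have hα : α = 0 := funext fun i => Finset.sum_eq_zero_iff.1 hk i (Finset.mem_univ i)
    exact hα ▸ zero
  | succ k ih =>
    obtain ⟨i, -, hi⟩ : ∃ i ∈ Finset.univ, α i ≠ 0 :=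
      Finset.exists_ne_zero_of_sum_ne_zero (by omega)
    have hle : Pi.single i 1 ≤ α := update_le_iff.2
      ⟨Nat.one_le_iff_ne_zero.2 hi, fun j _ => Nat.zero_le (α j)⟩
    have hα : α - Pi.single i 1 + Pi.single i 1 = α := tsub_add_cancel_of_le hle
    have hsum : ∑ j, (α - Pi.single i 1 : ι → ℕ) j + 1 = k + 1 := by
      rw [← hk, ← congrArg (fun β : ι → ℕ => ∑ j, β j) hα]
      simp [Finset.sum_add_distrib]
    exact hα ▸ add_single _ i (ih _ (by omega))

lemma iterate_rel {X Y : Type*} {R : X → Y → Prop} {f : X → X} {g : Y → Y}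
    (hR : ∀ x y, R x y → R (f x) (g y)) (n : ℕ) {x : X} {y : Y} (h : R x y) :
    R (f^[n] x) (g^[n] y) := by
  induction n with
  | zero => exact h
  | succ n ih => simpa only [Function.iterate_succ_apply'] using hR _ _ ih

lemma partialDeriv_zero (u : Euc d → F) : partialDeriv 0 u = u := by
  unfold partialDeriv
  induction List.finRange d with
  | nil => rfl
  | cons _ _ ih => exact ih

lemma partialDeriv_rel {R : (Euc d → F) → (Euc d → G) → Prop}
    (hR : ∀ i u v, R u v → R (∂[i] u) (∂[i] v)) (α : Fin d → ℕ) {u : Euc d → F} {v : Euc d → G}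
    (h : R u v) : R (partialDeriv α u) (partialDeriv α v) :=
  List.foldr_rel h fun i _ _ _ => iterate_rel (hR i) (α i)

lemma partialDeriv_preserves {P : (Euc d → F) → Prop} (hP : ∀ i u, P u → P (∂[i] u))
    (α : Fin d → ℕ) (h : P u) : P (partialDeriv α u) :=
  partialDeriv_rel (R := fun a _ => P a) (fun i a _ => hP i a) α (v := u) h

lemma differentiableAt_of_contDiffOn (hΩ : IsOpen Ω) (h : ContDiffOn ℝ (⊤ : ℕ∞) u Ω) {x : Euc d}
    (hx : x ∈ Ω) : DifferentiableAt ℝ u x :=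
  (h.contDiffAt (hΩ.mem_nhds hx)).differentiableAt (by simp)

lemma eqOn_pderivDir (hΩ : IsOpen Ω) (e : Euc d) (h : EqOn u v Ω) :
    EqOn (pderivDir e u) (pderivDir e v) Ω := fun x hx => by
  simp only [pderivDir, (h.eventuallyEq_of_mem (hΩ.mem_nhds hx)).fderiv_eq]

lemma eqOn_partialDeriv (hΩ : IsOpen Ω) (α : Fin d → ℕ) (h : EqOn u v Ω) :
    EqOn (partialDeriv α u) (partialDeriv α v) Ω :=
  partialDeriv_rel (R := fun a b => EqOn a b Ω) (fun _ _ _ => eqOn_pderivDir hΩ _) α h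

lemma partialDeriv_zero_fun (α : Fin d → ℕ) : partialDeriv α (0 : Euc d → F) = 0 :=
  partialDeriv_preserves (P := (· = 0)) (fun i a h => by ext x; simp [h, pderivDir]) α rfl

lemma contDiffOn_pderivDir (hΩ : IsOpen Ω) (e : Euc d) (h : ContDiffOn ℝ (⊤ : ℕ∞) u Ω) :
    ContDiffOn ℝ (⊤ : ℕ∞) (pderivDir e u) Ω :=
  (h.fderiv_of_isOpen hΩ (by simp)).clm_apply contDiffOn_const

lemma contDiffOn_partialDeriv (hΩ : IsOpen Ω) (α : Fin d → ℕ) (h : ContDiffOn ℝ (⊤ : ℕ∞) u Ω) :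
    ContDiffOn ℝ (⊤ : ℕ∞) (partialDeriv α u) Ω :=
  partialDeriv_preserves (P := fun a => ContDiffOn ℝ (⊤ : ℕ∞) a Ω)
    (fun _ _ => contDiffOn_pderivDir hΩ _) α h

lemma contDiff_pderivDir (e : Euc d) (h : ContDiff ℝ (⊤ : ℕ∞) u) :
    ContDiff ℝ (⊤ : ℕ∞) (pderivDir e u) :=
  contDiffOn_univ.1 (contDiffOn_pderivDir isOpen_univ e h.contDiffOn)

lemma contDiff_partialDeriv (α : Fin d → ℕ) (h : ContDiff ℝ (⊤ : ℕ∞) u) :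
    ContDiff ℝ (⊤ : ℕ∞) (partialDeriv α u) :=
  contDiffOn_univ.1 (contDiffOn_partialDeriv isOpen_univ α h.contDiffOn)

lemma hasCompactSupport_partialDeriv (α : Fin d → ℕ) (h : HasCompactSupport u) :
    HasCompactSupport (partialDeriv α u) :=
  partialDeriv_preserves (fun _ _ h => h.fderiv_apply ℝ _) α h

lemma pderivDir_comm (hΩ : IsOpen Ω) (e e' : Euc d) (h : ContDiffOn ℝ (⊤ : ℕ∞) u Ω) :
    EqOn (pderivDir e (pderivDir e' u)) (pderivDir e' (pderivDir e u)) Ω := fun x hx => by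
  have hsymm : IsSymmSndFDerivAt ℝ u x :=
    (h.contDiffAt (hΩ.mem_nhds hx)).isSymmSndFDerivAt
      (by simpa using WithTop.coe_le_coe.2 (le_top (a := (2 : ℕ∞))))
  have hdiff : DifferentiableAt ℝ (fderiv ℝ u) x :=
    differentiableAt_of_contDiffOn hΩ (h.fderiv_of_isOpen hΩ (by simp)) hx
  have hsnd (a b : Euc d) : pderivDir a (pderivDir b u) x = fderiv ℝ (fderiv ℝ u) x a b := by
    change fderiv ℝ (fun y => fderiv ℝ u y b) x a = _
    rw [fderiv_clm_apply hdiff (differentiableAt_const b)]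
    simp
  rw [hsnd, hsnd, hsymm.eq]

lemma eqOn_partialDeriv_add_single (hΩ : IsOpen Ω) (α : Fin d → ℕ) (i : Fin d)
    (h : ContDiffOn ℝ (⊤ : ℕ∞) u Ω) :
    EqOn (partialDeriv (α + Pi.single i 1) u) (∂[i] (partialDeriv α u)) Ω := by
  obtain ⟨s, t, hst⟩ := List.append_of_mem (List.mem_finRange i)
  have hnodup : (i :: (s ++ t)).Nodup :=
    List.nodup_middle.1 (hst ▸ List.nodup_finRange d)
  have hne {j : Fin d} (hj : j ∈ s ++ t) : (α + Pi.single i 1 : Fin d → ℕ) j = α j := by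
    have hji : j ≠ i := fun hji => (List.nodup_cons.1 hnodup).1 (hji ▸ hj)
    simp [hji]
  let R (a b : Euc d → F) : Prop := ContDiffOn ℝ (⊤ : ℕ∞) b Ω ∧ EqOn a (∂[i] b) Ω
  have hR (j : Fin d) (a b : Euc d → F) (hab : R a b) : R (∂[j] a) (∂[j] b) :=
    ⟨contDiffOn_pderivDir hΩ _ hab.1,
      (eqOn_pderivDir hΩ _ hab.2).trans (pderivDir_comm hΩ _ _ hab.1)⟩
  let S (a b : Euc d → F) : Prop := a = b ∧ ContDiffOn ℝ (⊤ : ℕ∞) b Ω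
  have hS (j : Fin d) (a b : Euc d → F) (hab : S a b) : S (∂[j] a) (∂[j] b) :=
    ⟨congrArg _ hab.1, contDiffOn_pderivDir hΩ _ hab.2⟩
  have htail : S (t.foldr (fun j v => (∂[j])^[(α + Pi.single i 1 : Fin d → ℕ) j] v) u)
      (t.foldr (fun j v => (∂[j])^[α j] v) u) :=
    List.foldr_rel ⟨rfl, h⟩ fun j hj a b hab => by
      rw [hne (List.mem_append_right s hj)]
      exact iterate_rel (hS j) (α j) hab
  unfold partialDeriv
  rw [hst, List.foldr_append, List.foldr_append, List.foldr_cons, List.foldr_cons, htail.1,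
    Pi.add_apply, Pi.single_eq_same, Function.iterate_succ_apply]
  refine (List.foldr_rel (r := R) ?_ fun j hj a b hab => ?_).2
  · exact iterate_rel (hR i) (α i) ⟨htail.2, eqOn_refl _ _⟩
  · rw [hne (List.mem_append_left t hj)]
    exact iterate_rel (hR j) (α j) hab

lemma eqOn_partialDeriv_sub (hΩ : IsOpen Ω) (α : Fin d → ℕ) (hu : ContDiffOn ℝ (⊤ : ℕ∞) u Ω)
    (hv : ContDiffOn ℝ (⊤ : ℕ∞) v Ω) :
    EqOn (partialDeriv α (u - v)) (partialDeriv α u - partialDeriv α v) Ω := by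
  induction α using multiIndex_induction with
  | zero => simp only [partialDeriv_zero, eqOn_refl]
  | add_single α i ih =>
    intro x hx
    have huv : ContDiffOn ℝ (⊤ : ℕ∞) (u - v) Ω := hu.sub hv
    have hdiff {w : Euc d → F} (hw : ContDiffOn ℝ (⊤ : ℕ∞) w Ω) :
        DifferentiableAt ℝ (partialDeriv α w) x :=
      differentiableAt_of_contDiffOn hΩ (contDiffOn_partialDeriv hΩ α hw) hx
    rw [eqOn_partialDeriv_add_single hΩ α i huv hx, eqOn_pderivDir hΩ _ ih hx,
      Pi.sub_apply, eqOn_partialDeriv_add_single hΩ α i hu hx,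
      eqOn_partialDeriv_add_single hΩ α i hv hx]
    simp only [pderivDir, fderiv_sub (hdiff hu) (hdiff hv), sub_apply]

lemma norm_fderiv_le_sum_pderivDir (u : Euc d → F) (x : Euc d) :
    ‖fderiv ℝ u x‖ ≤ ∑ i, ‖∂[i] u x‖ := by
  refine ContinuousLinearMap.opNorm_le_bound _ (by positivity) fun y => ?_
  have hy : y = ∑ i, y i • EuclideanSpace.single i (1 : ℝ) := by
    simpa using ((EuclideanSpace.basisFun (Fin d) ℝ).sum_repr y).symm
  calc ‖fderiv ℝ u x y‖ = ‖∑ i, y i • ∂[i] u x‖ := by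
        conv_lhs => rw [hy, map_sum]
        simp only [map_smul, pderivDir]
    _ ≤ ∑ i, ‖∂[i] u x‖ * ‖y‖ := norm_sum_le_of_le _ fun i _ => by
        rw [norm_smul, mul_comm]
        gcongr
        exact PiLp.norm_apply_le y i
    _ = (∑ i, ‖∂[i] u x‖) * ‖y‖ := (Finset.sum_mul ..).symm

lemma pSemi_le {α : Fin d → ℕ} {C : ℝ} (hC : 0 ≤ C) (h : ∀ x ∈ K, ‖partialDeriv α u x‖ ≤ C) :
    pSemi α K u ≤ C :=
  Real.sSup_le (forall_mem_image.2 h) hC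

lemma norm_partialDeriv_le_pSemi (hΩ : IsOpen Ω) (hK : IsCompact K) (hKΩ : K ⊆ Ω)
    (hu : ContDiffOn ℝ (⊤ : ℕ∞) u Ω) (α : Fin d → ℕ) {x : Euc d} (hx : x ∈ K) :
    ‖partialDeriv α u x‖ ≤ pSemi α K u :=
  le_csSup (hK.bddAbove_image ((contDiffOn_partialDeriv hΩ α hu).continuousOn.mono hKΩ).norm)
    (mem_image_of_mem _ hx)

lemma pSemi_nonneg (α : Fin d → ℕ) (K : Set (Euc d)) (u : Euc d → F) : 0 ≤ pSemi α K u :=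
  Real.sSup_nonneg (forall_mem_image.2 fun _ _ => norm_nonneg _)

end PartialDeriv

section UniformBigO

variable {X E : Type*} [NormedAddCommGroup E] {K L : Set X} {b c : ℝ} {f g : ℝ → X → E}

/-- The asymptotic bound `g ε x = O(ε ^ b)` as `ε → 0⁺`, uniformly in `x ∈ K`. -/
def IsUniformBigO (K : Set X) (b : ℝ) (g : ℝ → X → E) : Prop :=
  (fun p : ℝ × X => g p.1 p.2) =O[𝓝[>] 0 ×ˢ 𝓟 K] fun p => p.1 ^ b

lemma isUniformBigO_iff :
    IsUniformBigO K b g ↔ ∃ C : ℝ, ∀ᶠ ε in 𝓝[>] (0 : ℝ), ∀ x ∈ K, ‖g ε x‖ ≤ C * ε ^ b := by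
  simp only [IsUniformBigO, Asymptotics.isBigO_iff, eventually_prod_principal_iff]
  refine exists_congr fun C => eventually_congr ?_
  filter_upwards [self_mem_nhdsWithin] with ε hε
  rw [Real.norm_of_nonneg (Real.rpow_nonneg (mem_Ioi.1 hε).le b)]

lemma isUniformBigO_zero : IsUniformBigO K b fun _ : ℝ => (0 : X → E) :=
  Asymptotics.isBigO_zero _ _

lemma eventually_mem_Ioo_zero_one : ∀ᶠ ε in 𝓝[>] (0 : ℝ), ε ∈ Ioo (0 : ℝ) 1 :=
  Ioo_mem_nhdsGT one_pos

namespace IsUniformBigO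

lemma mono (h : IsUniformBigO K b g) (hLK : L ⊆ K) : IsUniformBigO L b g :=
  Asymptotics.IsBigO.mono h (prod_mono le_rfl (principal_mono.2 hLK))

lemma congr (h : IsUniformBigO K b f) (hfg : ∀ᶠ ε in 𝓝[>] (0 : ℝ), EqOn (f ε) (g ε) K) :
    IsUniformBigO K b g := by
  obtain ⟨C, hC⟩ := isUniformBigO_iff.1 h
  refine isUniformBigO_iff.2 ⟨C, ?_⟩
  filter_upwards [hC, hfg] with ε hε hfg x hx using hfg hx ▸ hε x hx

lemma sub (hf : IsUniformBigO K b f) (hg : IsUniformBigO K b g) : IsUniformBigO K b (f - g) :=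
  Asymptotics.IsBigO.sub hf hg

lemma neg (hf : IsUniformBigO K b f) : IsUniformBigO K b (-f) :=
  Asymptotics.IsBigO.neg_left hf

lemma eventually_norm_le (h : IsUniformBigO K b g) (hcb : c < b) :
    ∀ᶠ ε in 𝓝[>] (0 : ℝ), ∀ x ∈ K, ‖g ε x‖ ≤ ε ^ c := by
  obtain ⟨C, hC⟩ := isUniformBigO_iff.1 h
  have hlim : Tendsto (fun ε : ℝ => C * ε ^ (b - c)) (𝓝[>] 0) (𝓝 0) := by
    have hpow := (Real.continuousAt_rpow_const 0 (b - c) (Or.inr (sub_pos.2 hcb).le)).tendsto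
    rw [Real.zero_rpow (sub_pos.2 hcb).ne'] at hpow
    simpa using (hpow.mono_left nhdsWithin_le_nhds).const_mul C
  filter_upwards [hC, hlim.eventually_le_const one_pos, self_mem_nhdsWithin] with ε hε hε1 hε0 x hx
  have hε0 : 0 < ε := hε0
  calc ‖g ε x‖ ≤ C * ε ^ b := hε x hx
    _ = C * ε ^ (b - c) * ε ^ c := by rw [mul_assoc, ← Real.rpow_add hε0, sub_add_cancel]
    _ ≤ ε ^ c := mul_le_of_le_one_left (Real.rpow_nonneg hε0.le c) hε1

lemma of_eventually_norm_le (h : ∀ᶠ ε in 𝓝[>] (0 : ℝ), ∀ x ∈ K, ‖g ε x‖ ≤ ε ^ b) :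
    IsUniformBigO K b g :=
  isUniformBigO_iff.2 ⟨1, by simpa only [one_mul] using h⟩

lemma of_le (h : IsUniformBigO K b g) (hcb : c ≤ b) : IsUniformBigO K c g := by
  rcases hcb.eq_or_lt with rfl | hcb
  · exact h
  · exact of_eventually_norm_le (h.eventually_norm_le hcb)

end IsUniformBigO

lemma smallE_iff_eventually {P : ℝ → Prop} : SmallE P ↔ ∀ᶠ ε in 𝓝[>] (0 : ℝ), P ε := by
  simp only [SmallE, (nhdsGT_basis (0 : ℝ)).eventually_iff, mem_Ioo, and_imp]

end UniformBigO

section SharpTopology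

variable {Ω K : Set (Euc d)} {α : Fin d → ℕ} {b c : ℝ} {u v w : ℝ → Euc d → ℂ}

lemma isUniformBigO_of_smallE_pSemi_le (hΩ : IsOpen Ω) (hK : IsCompact K) (hKΩ : K ⊆ Ω)
    (hu : ∀ ε ∈ Ioo (0 : ℝ) 1, ContDiffOn ℝ (⊤ : ℕ∞) (u ε) Ω)
    (h : SmallE fun ε => pSemi α K (u ε) ≤ ε ^ b) :
    IsUniformBigO K b fun ε => partialDeriv α (u ε) := by
  refine .of_eventually_norm_le ?_
  filter_upwards [smallE_iff_eventually.1 h, eventually_mem_Ioo_zero_one] with ε hε hε01 x hx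
  exact (norm_partialDeriv_le_pSemi hΩ hK hKΩ (hu ε hε01) α hx).trans hε

lemma smallE_pSemi_le_of_isUniformBigO (h : IsUniformBigO K b fun ε => partialDeriv α (u ε))
    (hcb : c < b) : SmallE fun ε => pSemi α K (u ε) ≤ ε ^ c := by
  refine smallE_iff_eventually.2 ?_
  filter_upwards [h.eventually_norm_le hcb, eventually_mem_Ioo_zero_one] with ε hε hε01
  exact pSemi_le (Real.rpow_nonneg hε01.1.le c) hε

lemma exists_isUniformBigO_of_moderate (hΩ : IsOpen Ω) (hK : IsCompact K) (hKΩ : K ⊆ Ω)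
    (hu : Moderate Ω u) (α : Fin d → ℕ) :
    ∃ N : ℕ, IsUniformBigO K (-N) fun ε => partialDeriv α (u ε) :=
  (hu.2 K hK hKΩ α).imp fun _ => isUniformBigO_of_smallE_pSemi_le hΩ hK hKΩ hu.1

/-- The derivatives `∂^α` of two nets are `O(ε ^ b)`-close uniformly on `K`. This is how all
distances in the sharp topology are estimated. -/
def DerivClose (K : Set (Euc d)) (α : Fin d → ℕ) (b : ℝ) (u v : ℝ → Euc d → ℂ) : Prop :=
  IsUniformBigO K b fun ε => partialDeriv α (u ε) - partialDeriv α (v ε)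

namespace DerivClose

lemma refl (u : ℝ → Euc d → ℂ) : DerivClose K α b u u := by
  simpa only [DerivClose, sub_self] using isUniformBigO_zero

lemma symm (h : DerivClose K α b u v) : DerivClose K α b v u := by
  simpa only [DerivClose, Pi.neg_def, neg_sub] using h.neg

lemma trans (huv : DerivClose K α b u v) (hvw : DerivClose K α b v w) :
    DerivClose K α b u w := by
  simpa only [DerivClose, Pi.sub_def, sub_sub_sub_cancel_right] using huv.sub hvw.symm

end DerivClose

lemma derivClose_iff (hΩ : IsOpen Ω) (hKΩ : K ⊆ Ω)
    (hu : ∀ ε ∈ Ioo (0 : ℝ) 1, ContDiffOn ℝ (⊤ : ℕ∞) (u ε) Ω)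
    (hv : ∀ ε ∈ Ioo (0 : ℝ) 1, ContDiffOn ℝ (⊤ : ℕ∞) (v ε) Ω) :
    DerivClose K α b u v ↔ IsUniformBigO K b fun ε => partialDeriv α (u ε - v ε) := by
  have hsub : ∀ᶠ ε in 𝓝[>] (0 : ℝ),
      EqOn (partialDeriv α (u ε - v ε)) (partialDeriv α (u ε) - partialDeriv α (v ε)) K := by
    filter_upwards [eventually_mem_Ioo_zero_one] with ε hε
    exact (eqOn_partialDeriv_sub hΩ α (hu ε hε) (hv ε hε)).mono hKΩ
  exact ⟨fun h => h.congr (hsub.mono fun _ h => h.symm), fun h => h.congr hsub⟩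

lemma nulRel_iff (hΩ : IsOpen Ω) {u v : ModNet Ω} :
    nulRel Ω u v ↔ ∀ K, IsCompact K → K ⊆ Ω → ∀ α b, DerivClose K α b u.1 v.1 := by
  have hsmooth : ∀ ε ∈ Ioo (0 : ℝ) 1, ContDiffOn ℝ (⊤ : ℕ∞) (u.1 ε - v.1 ε) Ω :=
    fun ε hε => (u.2.1 ε hε).sub (v.2.1 ε hε)
  constructor
  · intro h K hK hKΩ α b
    obtain ⟨m, hm⟩ := exists_nat_ge b
    have hO := isUniformBigO_of_smallE_pSemi_le hΩ hK hKΩ hsmooth (h.2 K hK hKΩ α m)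
    exact (derivClose_iff hΩ hKΩ u.2.1 v.2.1).2 (hO.of_le hm)
  · refine fun h => ⟨hsmooth, fun K hK hKΩ α m => ?_⟩
    have hO := (derivClose_iff hΩ hKΩ u.2.1 v.2.1).1 (h K hK hKΩ α (m + 1))
    exact smallE_pSemi_le_of_isUniformBigO hO (lt_add_one _)

lemma equivalence_nulRel (hΩ : IsOpen Ω) : Equivalence (nulRel Ω) where
  refl u := (nulRel_iff hΩ).2 fun _ _ _ _ _ => .refl u.1
  symm h := (nulRel_iff hΩ).2 fun K hK hKΩ α b => ((nulRel_iff hΩ).1 h K hK hKΩ α b).symm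
  trans h h' := (nulRel_iff hΩ).2 fun K hK hKΩ α b =>
    ((nulRel_iff hΩ).1 h K hK hKΩ α b).trans ((nulRel_iff hΩ).1 h' K hK hKΩ α b)

lemma derivClose_out_mk (hΩ : IsOpen Ω) (hK : IsCompact K) (hKΩ : K ⊆ Ω) (α : Fin d → ℕ) (b : ℝ)
    (u : ModNet Ω) : DerivClose K α b (Quot.mk (nulRel Ω) u).out.1 u.1 := by
  have hmk := Quot.eqvGen_exact (Quot.out_eq (Quot.mk (nulRel Ω) u))
  exact (nulRel_iff hΩ).1 ((equivalence_nulRel hΩ).eqvGen_iff.1 hmk) K hK hKΩ α b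

lemma sharpNorm_lt_iff {z : ℝ → ℂ} {r : ℝ} (hr : 0 < r)
    (hz : ∃ b : ℝ, SmallE fun ε => ‖z ε‖ ≤ ε ^ b) :
    sharpNorm z < r ↔ ∃ b : ℝ, -Real.log r < b ∧ SmallE fun ε => ‖z ε‖ ≤ ε ^ b := by
  have hval : sharpNorm z < r ↔ ((-Real.log r : ℝ) : EReal) < valuation z := by
    rw [sharpNorm]
    split_ifs with htop
    · simpa only [htop, EReal.coe_lt_top, iff_true] using hr
    · obtain ⟨b, hb⟩ := hz
      have hbot : valuation z ≠ ⊥ :=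
        ((EReal.bot_lt_coe b).trans_le (le_sSup (mem_image_of_mem _ hb))).ne'
      rw [← Real.lt_log_iff_exp_lt hr, ← EReal.coe_toReal htop hbot, EReal.coe_lt_coe_iff,
        EReal.toReal_coe, neg_lt]
  rw [hval, valuation, lt_sSup_iff]
  constructor
  · rintro ⟨_, ⟨b, hb, rfl⟩, hrb⟩
    exact ⟨b, EReal.coe_lt_coe_iff.1 hrb, hb⟩
  · rintro ⟨b, hrb, hb⟩
    exact ⟨b, mem_image_of_mem _ hb, EReal.coe_lt_coe_iff.2 hrb⟩

lemma exists_derivClose (hΩ : IsOpen Ω) (hK : IsCompact K) (hKΩ : K ⊆ Ω) (α : Fin d → ℕ)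
    (hu : Moderate Ω u) (hv : Moderate Ω v) : ∃ b : ℝ, DerivClose K α b u v := by
  obtain ⟨M, hM⟩ := exists_isUniformBigO_of_moderate hΩ hK hKΩ hu α
  obtain ⟨N, hN⟩ := exists_isUniformBigO_of_moderate hΩ hK hKΩ hv α
  exact ⟨_, (hM.of_le (min_le_left _ (-(N : ℝ)))).sub (hN.of_le (min_le_right _ _))⟩

lemma sharpNorm_pSemi_sub_lt_iff (hΩ : IsOpen Ω) (hK : IsCompact K) (hKΩ : K ⊆ Ω) {r : ℝ}
    (hr : 0 < r) (α : Fin d → ℕ) (hu : Moderate Ω u) (hv : Moderate Ω v) :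
    (sharpNorm fun ε => ((pSemi α K (u ε - v ε) : ℝ) : ℂ)) < r ↔
      ∃ b : ℝ, -Real.log r < b ∧ DerivClose K α b u v := by
  have hnorm (ε : ℝ) : ‖((pSemi α K (u ε - v ε) : ℝ) : ℂ)‖ = pSemi α K (u ε - v ε) := by
    rw [Complex.norm_real, Real.norm_of_nonneg (pSemi_nonneg ..)]
  have smallE_of_close {b c : ℝ} (hcb : c < b) (h : DerivClose K α b u v) :
      SmallE fun ε => pSemi α K (u ε - v ε) ≤ ε ^ c :=
    smallE_pSemi_le_of_isUniformBigO ((derivClose_iff hΩ hKΩ hu.1 hv.1).1 h) hcb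
  obtain ⟨b₀, hb₀⟩ := exists_derivClose hΩ hK hKΩ α hu hv
  rw [sharpNorm_lt_iff hr
    ⟨b₀ - 1, by simpa only [hnorm] using smallE_of_close (sub_one_lt b₀) hb₀⟩]
  simp only [hnorm]
  constructor
  · rintro ⟨b, hb, hsmall⟩
    exact ⟨b, hb, (derivClose_iff hΩ hKΩ hu.1 hv.1).2 (isUniformBigO_of_smallE_pSemi_le hΩ hK hKΩ
      (fun ε hε => (hu.1 ε hε).sub (hv.1 ε hε)) hsmall)⟩
  · rintro ⟨b, hb, hclose⟩
    obtain ⟨c, hc, hcb⟩ := exists_between hb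
    exact ⟨c, hc, smallE_of_close hcb hclose⟩

lemma PNormDiff_mk_lt_iff (hΩ : IsOpen Ω) (hK : IsCompact K) (hKΩ : K ⊆ Ω) {r : ℝ} (hr : 0 < r)
    (α : Fin d → ℕ) (u v : ModNet Ω) :
    PNormDiff Ω α K (Quot.mk _ u) (Quot.mk _ v) < r ↔
      ∃ b : ℝ, -Real.log r < b ∧ DerivClose K α b u.1 v.1 := by
  have hu (b : ℝ) := derivClose_out_mk hΩ hK hKΩ α b u
  have hv (b : ℝ) := derivClose_out_mk hΩ hK hKΩ α b v
  refine (sharpNorm_pSemi_sub_lt_iff hΩ hK hKΩ hr α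
    (Quot.mk (nulRel Ω) u).out.2 (Quot.mk (nulRel Ω) v).out.2).trans ?_
  exact exists_congr fun b => and_congr_right fun _ =>
    ⟨fun h => ((hu b).symm.trans h).trans (hv b), fun h => ((hu b).trans h).trans (hv b).symm⟩

lemma tendsto_mk_nhds_sharpTopology (hΩ : IsOpen Ω) {ι : Type*} {l : Filter ι} {v : ι → ModNet Ω}
    {w : ModNet Ω} (h : ∀ K, IsCompact K → K ⊆ Ω → ∀ α b, ∀ᶠ n in l, DerivClose K α b w.1 (v n).1) :
    Tendsto (fun n => Quot.mk (nulRel Ω) (v n)) l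
      (@nhds _ (sharpTopology Ω) (Quot.mk (nulRel Ω) w)) := by
  refine TopologicalSpace.tendsto_nhds_generateFrom_iff.2 ?_
  rintro _ ⟨⟨u⟩, α, K, r, hK, hKΩ, hr, rfl⟩ hw
  obtain ⟨b, hb, hclose⟩ := (PNormDiff_mk_lt_iff hΩ hK hKΩ hr α u w).1 hw
  filter_upwards [h K hK hKΩ α b] with n hn
  exact (PNormDiff_mk_lt_iff hΩ hK hKΩ hr α u (v n)).2 ⟨b, hb, hclose.trans hn⟩

end SharpTopology

section Convolution

variable {f : Euc d → ℂ} {φ ψ : Euc d → ℝ} {r B C δ : ℝ} {x : Euc d}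

lemma partialDeriv_convolution {E E' F : Type} [NormedAddCommGroup E] [NormedSpace ℝ E]
    [NormedAddCommGroup E'] [NormedSpace ℝ E'] [NormedAddCommGroup F] [NormedSpace ℝ F]
    (L : E →L[ℝ] E' →L[ℝ] F) {f : Euc d → E} {g : Euc d → E'} (hf : LocallyIntegrable f)
    (hgc : HasCompactSupport g) (hg : ContDiff ℝ (⊤ : ℕ∞) g) (α : Fin d → ℕ) :
    partialDeriv α (convolution f g L volume) = convolution f (partialDeriv α g) L volume := by
  refine (partialDeriv_rel (R := fun a b : _ → _ => a = convolution f b L volume ∧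
    HasCompactSupport b ∧ ContDiff ℝ (⊤ : ℕ∞) b) ?_ α ⟨rfl, hgc, hg⟩).1
  rintro i _ b ⟨rfl, hbc, hb⟩
  refine ⟨funext fun x => ?_, hbc.fderiv_apply ℝ _, contDiff_pderivDir _ hb⟩
  have hb1 : ContDiff ℝ 1 b := hb.of_le (by exact_mod_cast le_top)
  rw [pderivDir, (hbc.hasFDerivAt_convolution_right L hf hb1 x).fderiv,
    convolution_precompR_apply L hf (hbc.fderiv ℝ) (hb1.continuous_fderiv one_ne_zero)]
  rfl

lemma conv_eq_convolution (f : Euc d → ℂ) (φ : Euc d → ℝ) :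
    conv f φ = convolution φ f (ContinuousLinearMap.lsmul ℝ ℝ) volume := by
  ext x
  simp only [conv, convolution_def, ContinuousLinearMap.lsmul_apply, Complex.real_smul, mul_comm]

lemma conv_eq_convolution_flip (f : Euc d → ℂ) (φ : Euc d → ℝ) :
    conv f φ = convolution f φ (ContinuousLinearMap.lsmul ℝ ℝ).flip volume := by
  rw [conv_eq_convolution, convolution_flip]

lemma contDiff_conv (hf : LocallyIntegrable f) (hφc : HasCompactSupport φ)
    (hφ : ContDiff ℝ (⊤ : ℕ∞) φ) : ContDiff ℝ (⊤ : ℕ∞) (conv f φ) := by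
  rw [conv_eq_convolution_flip]
  exact hφc.contDiff_convolution_right _ hf hφ

lemma partialDeriv_conv_left (hφ : LocallyIntegrable φ) (hfc : HasCompactSupport f)
    (hf : ContDiff ℝ (⊤ : ℕ∞) f) (α : Fin d → ℕ) :
    partialDeriv α (conv f φ) = conv (partialDeriv α f) φ := by
  simp only [conv_eq_convolution, partialDeriv_convolution _ hφ hfc hf]

lemma partialDeriv_conv_right (hf : LocallyIntegrable f) (hφc : HasCompactSupport φ)
    (hφ : ContDiff ℝ (⊤ : ℕ∞) φ) (α : Fin d → ℕ) :
    partialDeriv α (conv f φ) = conv f (partialDeriv α φ) := by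
  simp only [conv_eq_convolution_flip, partialDeriv_convolution _ hf hφc hφ]

lemma norm_conv_le (hf : ∀ y, ‖f y‖ ≤ B) (hφ : Integrable φ) (x : Euc d) :
    ‖conv f φ x‖ ≤ B * ∫ t, ‖φ t‖ := by
  rw [conv, ← integral_const_mul]
  refine norm_integral_le_of_norm_le (hφ.norm.const_mul B) (.of_forall fun t => ?_)
  rw [norm_mul, Complex.norm_real]
  gcongr
  exact hf _

lemma integral_mollify (φ : Euc d → ℝ) (hδ : 0 < δ) : ∫ t, mollify φ δ t = ∫ t, φ t := by
  simp only [mollify]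
  rw [integral_const_mul, Measure.integral_comp_inv_smul_of_nonneg volume φ hδ.le,
    finrank_euclideanSpace_fin, smul_eq_mul, inv_mul_cancel_left₀ (pow_pos hδ d).ne']

lemma norm_mollify (φ : Euc d → ℝ) (hδ : 0 < δ) (x : Euc d) :
    ‖mollify φ δ x‖ = mollify (fun y => ‖φ y‖) δ x := by
  rw [mollify, mollify, norm_mul, Real.norm_of_nonneg (by positivity)]

lemma contDiff_mollify (hφ : ContDiff ℝ (⊤ : ℕ∞) φ) (δ : ℝ) :
    ContDiff ℝ (⊤ : ℕ∞) (mollify φ δ) :=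
  contDiff_const.mul (hφ.comp (contDiff_const_smul _))

lemma partialDeriv_mollify (hφ : ContDiff ℝ (⊤ : ℕ∞) φ) (δ : ℝ) (α : Fin d → ℕ) :
    partialDeriv α (mollify φ δ) = fun x => (δ ^ ∑ i, α i)⁻¹ * mollify (partialDeriv α φ) δ x := by
  induction α using multiIndex_induction with
  | zero => simp [partialDeriv_zero]
  | add_single α i ih =>
    ext x
    have hdiff : DifferentiableAt ℝ (mollify (partialDeriv α φ) δ) x :=
      (contDiff_mollify (contDiff_partialDeriv α hφ) δ).differentiable (by simp) x
    have hdiff' : DifferentiableAt ℝ (fun y => partialDeriv α φ (δ⁻¹ • y)) x :=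
      ((contDiff_partialDeriv α hφ).comp (contDiff_const_smul _)).differentiable (by simp) x
    rw [eqOn_partialDeriv_add_single isOpen_univ α i (contDiff_mollify hφ δ).contDiffOn trivial, ih,
      pderivDir, fderiv_const_mul hdiff]
    unfold mollify
    rw [fderiv_const_mul hdiff', fderiv_comp_smul,
      eqOn_partialDeriv_add_single isOpen_univ α i hφ.contDiffOn trivial]
    simp only [pderivDir, smul_apply, smul_eq_mul, Pi.add_apply, Finset.sum_add_distrib,
      Finset.sum_pi_single', Finset.mem_univ, if_true, pow_succ, mul_inv]
    ring

/-- A mollifier of radius `r`: a smooth probability density on `ℝ^d` supported in the open ball of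
radius `r` around the origin. -/
structure IsMollifier (r : ℝ) (ψ : Euc d → ℝ) : Prop where
  contDiff : ContDiff ℝ (⊤ : ℕ∞) ψ
  support_subset : Function.support ψ ⊆ ball 0 r
  nonneg : ∀ x, 0 ≤ ψ x
  integral_eq_one : ∫ x, ψ x = 1

lemma exists_isMollifier (d : ℕ) : ∃ ψ : Euc d → ℝ, IsMollifier 1 ψ :=
  let φ : ContDiffBump (0 : Euc d) := ⟨1 / 2, 1, by norm_num, by norm_num⟩
  ⟨φ.normed volume, φ.contDiff_normed, φ.support_normed_eq.subset, φ.nonneg_normed,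
    φ.integral_normed⟩

namespace IsMollifier

lemma pos (hψ : IsMollifier r ψ) : 0 < r := by
  by_contra! hr
  have hzero : ψ = 0 := by
    simpa only [ball_eq_empty.2 hr, subset_empty_iff, Function.support_eq_empty_iff]
      using hψ.support_subset
  simpa [hzero] using hψ.integral_eq_one

lemma hasCompactSupport (hψ : IsMollifier r ψ) : HasCompactSupport ψ :=
  .of_support_subset_isCompact (isCompact_closedBall 0 r)
    (hψ.support_subset.trans ball_subset_closedBall)

protected lemma mollify (hψ : IsMollifier r ψ) (hδ : 0 < δ) :
    IsMollifier (δ * r) (mollify ψ δ) where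
  contDiff := contDiff_mollify hψ.contDiff δ
  support_subset x hx := by
    have hx' : δ⁻¹ • x ∈ ball 0 r :=
      hψ.support_subset (Function.mem_support.2 (right_ne_zero_of_mul hx))
    rwa [mem_ball_zero_iff, norm_smul, norm_inv, Real.norm_of_nonneg hδ.le,
      inv_mul_lt_iff₀ hδ, ← mem_ball_zero_iff] at hx'
  nonneg x := mul_nonneg (by positivity) (hψ.nonneg _)
  integral_eq_one := (integral_mollify ψ hδ).trans hψ.integral_eq_one

lemma conv_eq_zero (hψ : IsMollifier r ψ) (hx : x ∉ cthickening r (tsupport f)) :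
    conv f ψ x = 0 := by
  refine integral_eq_zero_of_ae (.of_forall fun t => mul_eq_zero.2 (or_iff_not_imp_left.2 ?_))
  refine fun hf => Complex.ofReal_eq_zero.2 (by_contra fun ht => hx ?_)
  have hdist : dist x (x - t) ≤ r := by
    rw [dist_eq_norm, sub_sub_cancel]
    exact (mem_ball_zero_iff.1 (hψ.support_subset ht)).le
  exact mem_cthickening_of_dist_le x (x - t) r _ (subset_tsupport f hf) hdist

lemma norm_conv_sub_le (hψ : IsMollifier r ψ) (hf : Differentiable ℝ f)
    (hC : ∀ y ∈ ball x r, ‖fderiv ℝ f y‖ ≤ C) : ‖conv f ψ x - f x‖ ≤ C * r := by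
  have hx : x ∈ ball x r := mem_ball_self hψ.pos
  have hC0 : 0 ≤ C := (norm_nonneg _).trans (hC x hx)
  rw [conv_eq_convolution, ← dist_eq_norm]
  refine dist_convolution_le (mul_nonneg hC0 hψ.pos.le) hψ.support_subset hψ.nonneg
    hψ.integral_eq_one hf.continuous.aestronglyMeasurable fun y hy => ?_
  calc dist (f y) (f x) = ‖f y - f x‖ := dist_eq_norm _ _
    _ ≤ C * ‖y - x‖ :=
      (convex_ball x r).norm_image_sub_le_of_norm_fderiv_le (fun z _ => hf z) hC hx hy
    _ ≤ C * r := by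
      rw [← dist_eq_norm]
      exact mul_le_mul_of_nonneg_left (mem_ball.1 hy).le hC0

lemma norm_partialDeriv_conv_sub_le (hψ : IsMollifier r ψ) (hfc : HasCompactSupport f)
    (hf : ContDiff ℝ (⊤ : ℕ∞) f) (α : Fin d → ℕ)
    (hB : ∀ i, ∀ y ∈ ball x r, ‖partialDeriv (α + Pi.single i 1) f y‖ ≤ B) :
    ‖partialDeriv α (conv f ψ) x - partialDeriv α f x‖ ≤ d * B * r := by
  have hfα := contDiff_partialDeriv α hf
  rw [partialDeriv_conv_left hψ.contDiff.continuous.locallyIntegrable hfc hf]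
  refine hψ.norm_conv_sub_le (hfα.differentiable (by simp)) fun y hy => ?_
  calc ‖fderiv ℝ (partialDeriv α f) y‖ ≤ ∑ i, ‖∂[i] (partialDeriv α f) y‖ :=
        norm_fderiv_le_sum_pderivDir _ y
    _ ≤ ∑ _i : Fin d, B := Finset.sum_le_sum fun i _ =>
        (eqOn_partialDeriv_add_single isOpen_univ α i hf.contDiffOn (mem_univ y)).symm ▸ hB i y hy
    _ = d * B := by simp

lemma norm_partialDeriv_conv_mollify_le (hψ : IsMollifier r ψ) (hδ : 0 < δ)
    (hf : Continuous f) (hB : ∀ y, ‖f y‖ ≤ B) (α : Fin d → ℕ) (x : Euc d) :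
    ‖partialDeriv α (conv f (mollify ψ δ)) x‖
      ≤ (∫ t, ‖partialDeriv α ψ t‖) * (δ ^ ∑ i, α i)⁻¹ * B := by
  have hψδ := hψ.mollify hδ
  have hint : Integrable (partialDeriv α (mollify ψ δ)) :=
    (contDiff_partialDeriv α hψδ.contDiff).continuous.integrable_of_hasCompactSupport
      (hasCompactSupport_partialDeriv α hψδ.hasCompactSupport)
  rw [partialDeriv_conv_right hf.locallyIntegrable hψδ.hasCompactSupport hψδ.contDiff]
  refine (norm_conv_le hB hint x).trans_eq ?_
  simp only [partialDeriv_mollify hψ.contDiff, norm_mul, norm_mollify _ hδ, integral_const_mul,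
    integral_mollify _ hδ, norm_inv, norm_pow, Real.norm_of_nonneg hδ.le]
  ring

end IsMollifier

end Convolution

section Approximation

open TopologicalSpace
open scoped Distributions Manifold

variable {Ω : Opens (Euc d)} {K L : Set (Euc d)} {ψ : Euc d → ℝ} {n : ℕ}
  {w : ℝ → Euc d → ℂ}

lemma exists_testFunction_eventually_eq_one (hK : IsCompact K) (hKΩ : K ⊆ Ω) :
    ∃ χ : 𝓓(Ω, ℂ), ∀ᶠ x in 𝓝ˢ K, χ x = 1 := by
  obtain ⟨L, hL, hKL, hLΩ⟩ := exists_compact_between hK Ω.isOpen hKΩ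
  obtain ⟨f, hf_one, hf_zero, -⟩ := exists_contMDiffMap_one_nhds_of_subset_interior
    (n := (⊤ : ℕ∞)) 𝓘(ℝ, Euc d) hK.isClosed hKL
  let χ (x : Euc d) : ℂ := f x
  have hχL : Function.support χ ⊆ L := Function.support_subset_iff'.2 fun x hx => by
    simp [χ, hf_zero x hx]
  exact ⟨⟨χ, Complex.ofRealCLM.contDiff.comp f.contMDiff.contDiff,
    .of_support_subset_isCompact hL hχL, (closure_minimal hχL hL.isClosed).trans hLΩ⟩,
    hf_one.mono fun x hx => congrArg Complex.ofReal hx⟩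

lemma exists_seq_testFunction_eventually_eq_one (Ω : Opens (Euc d)) :
    ∃ χ : ℕ → 𝓓(Ω, ℂ),
      ∀ K : Set (Euc d), IsCompact K → K ⊆ Ω → ∀ᶠ n in atTop, ∀ᶠ x in 𝓝ˢ K, χ n x = 1 := by
  have : LocallyCompactSpace Ω := Ω.isOpen.locallyCompactSpace
  let L : CompactExhaustion Ω := .choice Ω
  choose χ hχ using fun n => exists_testFunction_eventually_eq_one (Ω := Ω)
    ((L.isCompact n).image continuous_subtype_val) (Subtype.coe_image_subset _ _)
  refine ⟨χ, fun K hK hKΩ => ?_⟩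
  lift K to Set Ω using hKΩ
  obtain ⟨N, hN⟩ := L.exists_superset_of_isCompact (Subtype.isCompact_iff.2 hK)
  filter_upwards [eventually_ge_atTop N] with n hn
  exact (hχ n).filter_mono (nhdsSet_mono (image_mono (hN.trans (L.subset hn))))

lemma contDiff_testFunction_mul (χ : 𝓓(Ω, ℂ)) {f : Euc d → ℂ} (hf : ContDiffOn ℝ (⊤ : ℕ∞) f Ω) :
    ContDiff ℝ (⊤ : ℕ∞) (⇑χ * f) :=
  contDiff_iff_contDiffAt.2 fun x => by
    by_cases hx : x ∈ tsupport χ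
    · exact χ.contDiff.contDiffAt.mul
        (hf.contDiffAt (Ω.isOpen.mem_nhds (χ.tsupport_subset hx)))
    · refine (contDiffAt_const (c := 0)).congr_of_eventuallyEq ?_
      filter_upwards [notMem_tsupport_iff_eventuallyEq.1 hx] with y hy
      simp [hy]

lemma isUniformBigO_testFunction_mul (χ : 𝓓(Ω, ℂ)) {b : ℝ} (hw : IsUniformBigO (tsupport χ) b w) :
    IsUniformBigO univ b fun ε => ⇑χ * w ε := by
  obtain ⟨B, hB⟩ := χ.hasCompactSupport.exists_bound_of_continuous χ.continuous
  obtain ⟨C, hC⟩ := isUniformBigO_iff.1 hw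
  refine isUniformBigO_iff.2 ⟨B * |C|, ?_⟩
  filter_upwards [hC, eventually_mem_Ioo_zero_one] with ε hε hε01 x _
  have hpow : 0 ≤ ε ^ b := Real.rpow_nonneg hε01.1.le b
  have hB0 : 0 ≤ B := (norm_nonneg _).trans (hB x)
  by_cases hx : x ∈ tsupport χ
  · calc ‖χ x * w ε x‖ = ‖χ x‖ * ‖w ε x‖ := norm_mul ..
      _ ≤ B * (|C| * ε ^ b) := by
        gcongr
        · exact hB x
        · exact (hε x hx).trans (by gcongr; exact le_abs_self C)
      _ = B * |C| * ε ^ b := (mul_assoc ..).symm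
  · rw [Pi.mul_apply, image_eq_zero_of_notMem_tsupport hx, zero_mul, norm_zero]
    positivity

/-- The cut-off regularization `((χ u_ε) ⋆ ψ_{ε^n})_ε` of a net `u`. With `χ` a test function,
`ψ` a mollifier and `n ≠ 0`, it represents an element of `𝒜` approximating the class of `u`. -/
def regularize (χ : Euc d → ℂ) (ψ : Euc d → ℝ) (n : ℕ) (u : ℝ → Euc d → ℂ) : ℝ → Euc d → ℂ :=
  fun ε => conv (χ * u ε) (mollify ψ (ε ^ n))

lemma eventually_pow_le (hn : n ≠ 0) {η : ℝ} (hη : 0 < η) : ∀ᶠ ε in 𝓝[>] (0 : ℝ), ε ^ n ≤ η :=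
  (((continuous_pow n).tendsto' 0 0 (zero_pow hn)).mono_left nhdsWithin_le_nhds).eventually_le_const
    hη

lemma smallE_pSemiK_le_of_isUniformBigO {k : ℕ} {b c : ℝ}
    (h : ∀ α : Fin d → ℕ, ∑ i, α i = k → IsUniformBigO K b fun ε => partialDeriv α (w ε))
    (hcb : c < b) : SmallE fun ε => pSemiK k K (w ε) ≤ ε ^ c := by
  have hall : ∀ᶠ ε in 𝓝[>] (0 : ℝ), ∀ α ∈ Finset.piAntidiag (Finset.univ : Finset (Fin d)) k,
      ∀ x ∈ K, ‖partialDeriv α (w ε) x‖ ≤ ε ^ c :=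
    (eventually_all_finset _).2 fun α hα =>
      (h α (Finset.mem_piAntidiag.1 hα).1).eventually_norm_le hcb
  refine smallE_iff_eventually.2 ?_
  filter_upwards [hall, eventually_mem_Ioo_zero_one] with ε hε hε01
  have hpow : 0 ≤ ε ^ c := Real.rpow_nonneg hε01.1.le c
  refine Real.sSup_le ?_ hpow
  rintro _ ⟨α, hα, rfl⟩
  exact pSemi_le hpow (hε α (by simp [hα]))

lemma contDiff_regularize (χ : 𝓓(Ω, ℂ)) (hψ : IsMollifier 1 ψ) (n : ℕ) (hw : Moderate Ω w) {ε : ℝ}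
    (hε : ε ∈ Ioo (0 : ℝ) 1) : ContDiff ℝ (⊤ : ℕ∞) (regularize χ ψ n w ε) :=
  have hψε := hψ.mollify (pow_pos hε.1 n)
  contDiff_conv (contDiff_testFunction_mul χ (hw.1 ε hε)).continuous.locallyIntegrable
    hψε.hasCompactSupport hψε.contDiff

/- All derivatives are moved onto the mollifier, so that only the supremum of `χ w_ε` enters and the
exponent `N` does not depend on `α`. -/
lemma exists_isUniformBigO_partialDeriv_regularize (χ : 𝓓(Ω, ℂ)) (hψ : IsMollifier 1 ψ) (n : ℕ)
    (hw : Moderate Ω w) : ∃ N : ℕ, ∀ α : Fin d → ℕ,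
      IsUniformBigO univ (-(n * ∑ i, α i : ℕ) - N) fun ε =>
        partialDeriv α (regularize χ ψ n w ε) := by
  obtain ⟨N, hN⟩ := exists_isUniformBigO_of_moderate Ω.isOpen χ.hasCompactSupport
    χ.tsupport_subset hw 0
  simp only [partialDeriv_zero] at hN
  obtain ⟨C, hC⟩ := isUniformBigO_iff.1 (isUniformBigO_testFunction_mul χ hN)
  refine ⟨N, fun α => isUniformBigO_iff.2 ⟨(∫ t, ‖partialDeriv α ψ t‖) * C, ?_⟩⟩
  filter_upwards [hC, eventually_mem_Ioo_zero_one] with ε hε hε01 x _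
  have hcont := (contDiff_testFunction_mul χ (hw.1 ε hε01)).continuous
  refine (hψ.norm_partialDeriv_conv_mollify_le (pow_pos hε01.1 n) hcont
    (fun y => hε y (mem_univ y)) α x).trans_eq ?_
  simp only [sub_eq_add_neg, Real.rpow_add hε01.1, Real.rpow_neg hε01.1.le, Real.rpow_natCast,
    pow_mul]
  ring

lemma moderate_regularize (χ : 𝓓(Ω, ℂ)) (hψ : IsMollifier 1 ψ) (n : ℕ) (hw : Moderate Ω w) :
    Moderate Ω (regularize χ ψ n w) := by
  obtain ⟨N, hN⟩ := exists_isUniformBigO_partialDeriv_regularize χ hψ n hw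
  refine ⟨fun ε hε => (contDiff_regularize χ hψ n hw hε).contDiffOn, fun K _ _ α => ?_⟩
  refine ⟨n * ∑ i, α i + N + 1,
    smallE_pSemi_le_of_isUniformBigO ((hN α).mono (subset_univ K)) ?_⟩
  push_cast
  linarith

lemma exists_smallE_pSemiK_regularize_le (χ : 𝓓(Ω, ℂ)) (hψ : IsMollifier 1 ψ) (n : ℕ)
    (hw : Moderate Ω w) : ∃ N : ℕ, ∀ (K : Set (Euc d)) (k : ℕ),
      SmallE fun ε => pSemiK k K (regularize χ ψ n w ε) ≤ ε ^ (-(N : ℝ) * k - N) := by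
  obtain ⟨N, hN⟩ := exists_isUniformBigO_partialDeriv_regularize χ hψ n hw
  refine ⟨n + N + 1, fun K k => smallE_pSemiK_le_of_isUniformBigO
    (fun α hα => hα ▸ (hN α).mono (subset_univ K)) ?_⟩
  push_cast
  nlinarith

lemma exists_negligible_regularize (χ : 𝓓(Ω, ℂ)) (hψ : IsMollifier 1 ψ) (hn : n ≠ 0)
    (hw : Moderate Ω w) :
    ∃ L, IsCompact L ∧ L ⊆ Ω ∧ Negligible (Ω \ L) (regularize χ ψ n w) := by
  obtain ⟨η, hη, hηΩ⟩ :=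
    χ.hasCompactSupport.isCompact.exists_cthickening_subset_open Ω.isOpen χ.tsupport_subset
  have hL : IsCompact (cthickening η (tsupport χ)) := χ.hasCompactSupport.isCompact.cthickening
  refine ⟨_, hL, hηΩ, fun ε hε => (contDiff_regularize χ hψ n hw hε).contDiffOn,
    fun K _ hK α m => smallE_pSemi_le_of_isUniformBigO (isUniformBigO_zero.congr ?_)
      (lt_add_one (m : ℝ))⟩
  filter_upwards [eventually_pow_le hn hη, eventually_mem_Ioo_zero_one] with ε hεη hε
  have hzero : EqOn 0 (regularize χ ψ n w ε) (cthickening η (tsupport χ))ᶜ := fun x hx =>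
    ((hψ.mollify (pow_pos hε.1 n)).conv_eq_zero fun hx' => hx ?_).symm
  · simpa only [partialDeriv_zero_fun] using
      (eqOn_partialDeriv hL.isClosed.isOpen_compl α hzero).mono fun x hx => (hK hx).2
  · rw [mul_one] at hx'
    exact cthickening_mono hεη _ (cthickening_subset_of_subset _
      (closure_mono fun y => left_ne_zero_of_mul) hx')

lemma derivClose_regularize {χ : 𝓓(Ω, ℂ)} (hψ : IsMollifier 1 ψ) (hn : n ≠ 0)
    (hw : Moderate Ω w) (hK : IsCompact K) (hKL : K ⊆ interior L) (hχ : ∀ᶠ x in 𝓝ˢ L, χ x = 1)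
    {α : Fin d → ℕ} {b c : ℝ}
    (hb : ∀ i, IsUniformBigO L b fun ε => partialDeriv (α + Pi.single i 1) (w ε)) (hcb : c < b) :
    DerivClose K α (n + c) w (regularize χ ψ n w) := by
  obtain ⟨η, hη, hηL⟩ := hK.exists_cthickening_subset_open isOpen_interior hKL
  obtain ⟨U, hU, hLU, hχU⟩ := eventually_nhdsSet_iff_exists.1 hχ
  have heq (ε : ℝ) (β : Fin d → ℕ) : EqOn (partialDeriv β (⇑χ * w ε)) (partialDeriv β (w ε)) L :=
    (eqOn_partialDeriv hU β fun y hy => by simp [hχU y hy]).mono hLU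
  refine DerivClose.symm (isUniformBigO_iff.2 ⟨d, ?_⟩)
  filter_upwards [eventually_pow_le hn hη, eventually_mem_Ioo_zero_one,
    eventually_all.2 fun i => (hb i).eventually_norm_le hcb] with ε hεη hε hbound x hx
  have hball : ball x (ε ^ n) ⊆ L := fun y hy => interior_subset
    (hηL (mem_cthickening_of_dist_le y x η K hx ((mem_ball.1 hy).le.trans hεη)))
  have hbound' : ∀ i, ∀ y ∈ ball x (ε ^ n),
      ‖partialDeriv (α + Pi.single i 1) (⇑χ * w ε) y‖ ≤ ε ^ c := fun i y hy =>
    (heq ε _ (hball hy)).symm ▸ hbound i y (hball hy)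
  have hψε : IsMollifier (ε ^ n) (mollify ψ (ε ^ n)) := by
    simpa only [mul_one] using hψ.mollify (pow_pos hε.1 n)
  calc ‖partialDeriv α (regularize χ ψ n w ε) x - partialDeriv α (w ε) x‖
      = ‖partialDeriv α (regularize χ ψ n w ε) x - partialDeriv α (⇑χ * w ε) x‖ := by
        rw [heq ε α (interior_subset (hKL hx))]
    _ ≤ d * ε ^ c * ε ^ n := hψε.norm_partialDeriv_conv_sub_le χ.hasCompactSupport.mul_right
        (contDiff_testFunction_mul χ (hw.1 ε hε)) α hbound'
    _ = d * ε ^ (n + c) := by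
        rw [Real.rpow_add hε.1, Real.rpow_natCast]
        ring

lemma eventually_derivClose_regularize {χ : ℕ → 𝓓(Ω, ℂ)}
    (hχ : ∀ L : Set (Euc d), IsCompact L → L ⊆ Ω → ∀ᶠ n in atTop, ∀ᶠ x in 𝓝ˢ L, χ n x = 1)
    (hψ : IsMollifier 1 ψ) (hw : Moderate Ω w) (hK : IsCompact K) (hKΩ : K ⊆ Ω) (α : Fin d → ℕ)
    (b : ℝ) : ∀ᶠ n in atTop, DerivClose K α b w (regularize (χ n) ψ n w) := by
  obtain ⟨L, hL, hKL, hLΩ⟩ := exists_compact_between hK Ω.isOpen hKΩ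
  choose N hN using fun i =>
    exists_isUniformBigO_of_moderate Ω.isOpen hL hLΩ hw (α + Pi.single i 1)
  obtain ⟨M, hM⟩ := Finite.exists_le N
  have hbound (i : Fin d) : IsUniformBigO L (-M) fun ε => partialDeriv (α + Pi.single i 1) (w ε) :=
    (hN i).of_le (neg_le_neg (Nat.cast_le.2 (hM i)))
  filter_upwards [hχ L hL hLΩ, eventually_ne_atTop 0,
    tendsto_natCast_atTop_atTop.eventually_ge_atTop (b + M + 1)] with n hχn hn hbn
  exact (derivClose_regularize hψ hn hw hK hKL hχn hbound (sub_one_lt _)).of_le (by linarith)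

end Approximation

/-- the set 𝒜 of compactly supported generalized functions with
uniform growth ε^{-Nk-N} of the k-th seminorms is dense in 𝒢(Ω). -/
theorem Aclass_dense {d : ℕ} (Ω : Set (Euc d)) (hΩ : IsOpen Ω) :
    @Dense (Colombeau Ω) (sharpTopology Ω)
      {u : Colombeau Ω | ∃ v : ModNet Ω, Quot.mk (nulRel Ω) v = u ∧
        u ∈ GCompact Ω ∧ ∃ N : ℕ,
          ∀ K : Set (Euc d), IsCompact K → K ⊆ Ω → ∀ k : ℕ,
            SmallE fun ε => pSemiK k K (v.1 ε) ≤ ε ^ (-(N : ℝ) * k - N)} := by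
  lift Ω to TopologicalSpace.Opens (Euc d) using hΩ
  let := sharpTopology (Ω : Set (Euc d))
  rintro ⟨w, hw⟩
  obtain ⟨ψ, hψ⟩ := exists_isMollifier d
  obtain ⟨χ, hχ⟩ := exists_seq_testFunction_eventually_eq_one Ω
  let v (n : ℕ) : ModNet Ω := ⟨regularize (χ n) ψ n w, moderate_regularize (χ n) hψ n hw⟩
  have hv : Tendsto (fun n => Quot.mk _ (v n)) atTop (𝓝 (Quot.mk (nulRel Ω) ⟨w, hw⟩)) :=
    tendsto_mk_nhds_sharpTopology (v := v) Ω.isOpen fun K hK hKΩ =>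
      eventually_derivClose_regularize hχ hψ hw hK hKΩ
  refine mem_closure_of_tendsto hv ?_
  filter_upwards [eventually_ne_atTop 0] with n hn
  obtain ⟨N, hN⟩ := exists_smallE_pSemiK_regularize_le (χ n) hψ n hw
  exact ⟨v n, rfl, ⟨v n, rfl, exists_negligible_regularize (χ n) hψ hn hw⟩, N,
    fun K _ _ k => hN K k⟩

end
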